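/- (Ascent step for k = 3) In the Cholesky setting, set I₁ = θ³ − θθ₂θ₁ − θ₁θ₂θ and I₂ = −θ³ + θθ₁θ₂ + θ₂θ₁θ. Then (1/2)Tr(𝛉³𝚯) + ∂̄( (1/2)Tr(θ₁³θ₂ + θ₁θ₂³ + (1/2)(θ₁θ₂)²) ) = ∂( (1/2)Tr(θ³θ̄ + I₁θ̄₁ + I₂θ̄₂) ). -/

import Mathlib

/-- An abstract model of the Dolbeault double complex of `(p,q)`-forms on a complex
manifold: a bigraded associative `ℂ`-algebra `Ω = ⨁ Ω^{p,q}`, graded-commutative with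
respect to total degree, with `ℂ`-linear operators `∂` (`pd`) and `∂̄` (`pdb`) of
bidegrees `(1,0)` and `(0,1)`, squaring to zero and anticommuting, satisfying the
graded Leibniz rule. -/
structure DolbeaultAlgebra (Ω : Type*) [Ring Ω] [Algebra ℂ Ω] where
  /-- the `ℂ`-subspace of elements of bidegree `(p,q)` -/
  deg : ℕ → ℕ → Submodule ℂ Ω
  one_mem : (1 : Ω) ∈ deg 0 0
  mul_mem : ∀ {p q p' q'} {a b : Ω}, a ∈ deg p q → b ∈ deg p' q' →
    a * b ∈ deg (p + p') (q + q')
  gcomm : ∀ {p q p' q'} (a b : Ω), a ∈ deg p q → b ∈ deg p' q' →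
    a * b = ((-1 : ℂ) ^ ((p + q) * (p' + q'))) • (b * a)
  /-- the operator `∂` -/
  pd : Ω →ₗ[ℂ] Ω
  /-- the operator `∂̄` -/
  pdb : Ω →ₗ[ℂ] Ω
  pd_mem : ∀ {p q} {a : Ω}, a ∈ deg p q → pd a ∈ deg (p + 1) q
  pdb_mem : ∀ {p q} {a : Ω}, a ∈ deg p q → pdb a ∈ deg p (q + 1)
  pd_pd : ∀ a : Ω, pd (pd a) = 0
  pdb_pdb : ∀ a : Ω, pdb (pdb a) = 0
  pd_pdb : ∀ a : Ω, pd (pdb a) + pdb (pd a) = 0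
  pd_leibniz : ∀ {p q} (a b : Ω), a ∈ deg p q →
    pd (a * b) = pd a * b + ((-1 : ℂ) ^ (p + q)) • (a * pd b)
  pdb_leibniz : ∀ {p q} (a b : Ω), a ∈ deg p q →
    pdb (a * b) = pdb a * b + ((-1 : ℂ) ^ (p + q)) • (a * pdb b)

namespace DolbeaultAlgebra

variable {Ω : Type*} [Ring Ω] [Algebra ℂ Ω] {r : ℕ}

/-- the entrywise extension of `∂` to `r × r` matrices over `Ω` -/
def mpd (A : DolbeaultAlgebra Ω) (M : Matrix (Fin r) (Fin r) Ω) :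
    Matrix (Fin r) (Fin r) Ω := M.map A.pd

/-- the entrywise extension of `∂̄` to `r × r` matrices over `Ω` -/
def mpdb (A : DolbeaultAlgebra Ω) (M : Matrix (Fin r) (Fin r) Ω) :
    Matrix (Fin r) (Fin r) Ω := M.map A.pdb

/-- the assertion that all entries of a matrix lie in `Ω^{p,q}` -/
def MatDeg (A : DolbeaultAlgebra Ω) (p q : ℕ) (M : Matrix (Fin r) (Fin r) Ω) : Prop :=
  ∀ i j, M i j ∈ A.deg p q

end DolbeaultAlgebra

variable {Ω : Type*} [Ring Ω] [Algebra ℂ Ω]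


namespace DolbeaultAlgebra

section helpers

variable {Ω : Type*} [Ring Ω] [Algebra ℂ Ω] {r : ℕ}

theorem mpd_add (A : DolbeaultAlgebra Ω) (M N : Matrix (Fin r) (Fin r) Ω) :
    A.mpd (M + N) = A.mpd M + A.mpd N := by
  ext i j; simp [mpd]

theorem mpdb_add (A : DolbeaultAlgebra Ω) (M N : Matrix (Fin r) (Fin r) Ω) :
    A.mpdb (M + N) = A.mpdb M + A.mpdb N := by
  ext i j; simp [mpdb]

theorem mpd_neg (A : DolbeaultAlgebra Ω) (M : Matrix (Fin r) (Fin r) Ω) :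
    A.mpd (-M) = -A.mpd M := by
  ext i j; simp [mpd]

theorem mpd_sub (A : DolbeaultAlgebra Ω) (M N : Matrix (Fin r) (Fin r) Ω) :
    A.mpd (M - N) = A.mpd M - A.mpd N := by
  ext i j; simp [mpd]

theorem mpdb_smul (A : DolbeaultAlgebra Ω) (z : ℂ) (M : Matrix (Fin r) (Fin r) Ω) :
    A.mpdb (z • M) = z • A.mpdb M := by
  ext i j; simp [mpdb]

theorem pd_trace (A : DolbeaultAlgebra Ω) (M : Matrix (Fin r) (Fin r) Ω) :
    A.pd M.trace = (A.mpd M).trace := by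
  simp [mpd, Matrix.trace, map_sum]

theorem pdb_trace (A : DolbeaultAlgebra Ω) (M : Matrix (Fin r) (Fin r) Ω) :
    A.pdb M.trace = (A.mpdb M).trace := by
  simp [mpdb, Matrix.trace, map_sum]

theorem mpd_mpd (A : DolbeaultAlgebra Ω) (M : Matrix (Fin r) (Fin r) Ω) :
    A.mpd (A.mpd M) = 0 := by
  ext i j; simp [mpd, A.pd_pd]

theorem mpd_mpdb (A : DolbeaultAlgebra Ω) (M : Matrix (Fin r) (Fin r) Ω) :
    A.mpd (A.mpdb M) = - A.mpdb (A.mpd M) := by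
  ext i j
  simpa [mpd, mpdb] using eq_neg_of_add_eq_zero_left (A.pd_pdb (M i j))

theorem mpd_mul (A : DolbeaultAlgebra Ω) {p q : ℕ} {M : Matrix (Fin r) (Fin r) Ω}
    (hM : A.MatDeg p q M) (N : Matrix (Fin r) (Fin r) Ω) :
    A.mpd (M * N) = A.mpd M * N + ((-1 : ℂ) ^ (p + q)) • (M * A.mpd N) := by
  ext i j
  simp only [mpd, Matrix.map_apply, Matrix.mul_apply, map_sum, Matrix.add_apply,
    Matrix.smul_apply, Finset.smul_sum, ← Finset.sum_add_distrib]
  exact Finset.sum_congr rfl fun k _ => A.pd_leibniz _ _ (hM i k)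

theorem mpdb_mul (A : DolbeaultAlgebra Ω) {p q : ℕ} {M : Matrix (Fin r) (Fin r) Ω}
    (hM : A.MatDeg p q M) (N : Matrix (Fin r) (Fin r) Ω) :
    A.mpdb (M * N) = A.mpdb M * N + ((-1 : ℂ) ^ (p + q)) • (M * A.mpdb N) := by
  ext i j
  simp only [mpdb, Matrix.map_apply, Matrix.mul_apply, map_sum, Matrix.add_apply,
    Matrix.smul_apply, Finset.smul_sum, ← Finset.sum_add_distrib]
  exact Finset.sum_congr rfl fun k _ => A.pdb_leibniz _ _ (hM i k)

theorem MatDeg.mul {A : DolbeaultAlgebra Ω} {p q p' q' : ℕ} {M N : Matrix (Fin r) (Fin r) Ω}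
    (hM : A.MatDeg p q M) (hN : A.MatDeg p' q' N) : A.MatDeg (p + p') (q + q') (M * N) := by
  intro i j
  rw [Matrix.mul_apply]
  exact Submodule.sum_mem _ fun k _ => A.mul_mem (hM i k) (hN k j)

theorem MatDeg.add {A : DolbeaultAlgebra Ω} {p q : ℕ} {M N : Matrix (Fin r) (Fin r) Ω}
    (hM : A.MatDeg p q M) (hN : A.MatDeg p q N) : A.MatDeg p q (M + N) :=
  fun i j => Submodule.add_mem _ (hM i j) (hN i j)

theorem MatDeg.pd {A : DolbeaultAlgebra Ω} {p q : ℕ} {M : Matrix (Fin r) (Fin r) Ω}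
    (hM : A.MatDeg p q M) : A.MatDeg (p + 1) q (A.mpd M) :=
  fun i j => A.pd_mem (hM i j)

theorem MatDeg.pdb {A : DolbeaultAlgebra Ω} {p q : ℕ} {M : Matrix (Fin r) (Fin r) Ω}
    (hM : A.MatDeg p q M) : A.MatDeg p (q + 1) (A.mpdb M) :=
  fun i j => A.pdb_mem (hM i j)

/-- graded cyclicity of the trace, in the case without sign -/
theorem trace_comm {A : DolbeaultAlgebra Ω} {p q p' q' : ℕ} {M N : Matrix (Fin r) (Fin r) Ω}
    (hM : A.MatDeg p q M) (hN : A.MatDeg p' q' N) (he : Even ((p + q) * (p' + q'))) :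
    (M * N).trace = (N * M).trace := by
  simp only [Matrix.trace, Matrix.diag_apply, Matrix.mul_apply]
  rw [Finset.sum_comm]
  refine Finset.sum_congr rfl fun i _ => Finset.sum_congr rfl fun j _ => ?_
  rw [A.gcomm _ _ (hM j i) (hN i j), he.neg_one_pow, one_smul]

theorem sq_zero_of_odd (A : DolbeaultAlgebra Ω) {x : Ω} (hx : x ∈ A.deg 1 0) : x * x = 0 := by
  have h := A.gcomm x x hx hx
  norm_num at h
  have h2 : (2 : ℂ) • (x * x) = 0 := by
    rw [two_smul]
    nth_rewrite 1 [h]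
    simp
  simpa using h2

/-- triangularity with respect to a numbering of the indices -/
def Tri (f : Fin r → ℕ) (M : Matrix (Fin r) (Fin r) Ω) : Prop :=
  ∀ i j, f i < f j → M i j = 0

theorem Tri.mul_diag {f : Fin r → ℕ} (hf : Function.Injective f)
    {M N : Matrix (Fin r) (Fin r) Ω} (hM : Tri f M) (hN : Tri f N) (i : Fin r) :
    (M * N) i i = M i i * N i i := by
  rw [Matrix.mul_apply]
  refine Finset.sum_eq_single i (fun k _ hk => ?_) (by simp)
  rcases lt_or_gt_of_ne (fun h => hk (hf h)) with h | h
  · rw [hN k i h, mul_zero]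
  · rw [hM i k h, zero_mul]

theorem Tri.mul {f : Fin r → ℕ}
    {M N : Matrix (Fin r) (Fin r) Ω} (hM : Tri f M) (hN : Tri f N) : Tri f (M * N) := by
  intro i j hij
  rw [Matrix.mul_apply]
  refine Finset.sum_eq_zero fun k _ => ?_
  rcases lt_or_ge (f i) (f k) with h | h
  · rw [hM i k h, zero_mul]
  · rw [hN k j (lt_of_le_of_lt h hij), mul_zero]

theorem Tri.pd {f : Fin r → ℕ} (A : DolbeaultAlgebra Ω)
    {M : Matrix (Fin r) (Fin r) Ω} (hM : Tri f M) : Tri f (A.mpd M) := by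
  intro i j hij
  simp [mpd, hM i j hij]

theorem Tri.pdb {f : Fin r → ℕ} (A : DolbeaultAlgebra Ω)
    {M : Matrix (Fin r) (Fin r) Ω} (hM : Tri f M) : Tri f (A.mpdb M) := by
  intro i j hij
  simp [mpdb, hM i j hij]

theorem Tri.inv {f : Fin r → ℕ} (hf : Function.Injective f) (A : DolbeaultAlgebra Ω)
    {M N : Matrix (Fin r) (Fin r) Ω} (hM : Tri f M) (dM : A.MatDeg 0 0 M) (dN : A.MatDeg 0 0 N)
    (hMN : M * N = 1) : Tri f N := by
  suffices H : ∀ n : ℕ, ∀ i j, f i = n → f i < f j → N i j = 0 from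
    fun i j hij => H (f i) i j rfl hij
  intro n
  induction n using Nat.strong_induction_on with
  | _ n ih =>
    intro i j hi hij
    have key : ∀ l, f i ≤ f l → (M * N) i l = M i i * N i l := by
      intro l hl
      rw [Matrix.mul_apply]
      refine Finset.sum_eq_single i (fun k _ hk => ?_) (by simp)
      rcases lt_or_gt_of_ne (fun h => hk (hf h)) with h | h
      · rw [ih (f k) (hi ▸ h) k l rfl (lt_of_lt_of_le h hl), mul_zero]
      · rw [hM i k h, zero_mul]
    have h1 := key i le_rfl
    have h2 := key j hij.le
    have hne : i ≠ j := fun h => by simp [h] at hij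
    rw [hMN, Matrix.one_apply_eq] at h1
    rw [hMN, Matrix.one_apply_ne hne] at h2
    have h3 : N i i * M i i = 1 := by
      have := A.gcomm _ _ (dN i i) (dM i i)
      simpa [← h1] using this
    calc N i j = N i i * M i i * N i j := by rw [h3, one_mul]
      _ = 0 := by rw [mul_assoc, ← h2, mul_zero]

theorem Tri.trace_zero {f : Fin r → ℕ} (hf : Function.Injective f) (A : DolbeaultAlgebra Ω)
    {M N : Matrix (Fin r) (Fin r) Ω} (hM : Tri f M) (dM : A.MatDeg 1 0 M) (hN : Tri f N) :
    (M * (M * N)).trace = 0 := by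
  simp only [Matrix.trace, Matrix.diag_apply]
  refine Finset.sum_eq_zero fun i _ => ?_
  rw [Tri.mul_diag hf hM (hM.mul hN), Tri.mul_diag hf hM hN, ← mul_assoc,
    A.sq_zero_of_odd (dM i i), zero_mul]

section rot
variable {A : DolbeaultAlgebra Ω} {x y z w t u : Matrix (Fin r) (Fin r) Ω}

theorem rot5_1 (hx : A.MatDeg 1 0 x) (hy : A.MatDeg 1 0 y) (hz : A.MatDeg 1 0 z)
    (hw : A.MatDeg 1 0 w) (ht : A.MatDeg 0 1 t) :
    (t * (x * (y * (z * w)))).trace = (x * (y * (z * (w * t)))).trace := by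
  rw [trace_comm ht (hx.mul (hy.mul (hz.mul hw))) (by decide)]
  simp only [mul_assoc]

theorem rot5_2 (hx : A.MatDeg 1 0 x) (hy : A.MatDeg 1 0 y) (hz : A.MatDeg 1 0 z)
    (hw : A.MatDeg 1 0 w) (ht : A.MatDeg 0 1 t) :
    (w * (t * (x * (y * z)))).trace = (x * (y * (z * (w * t)))).trace := by
  rw [← mul_assoc, trace_comm (hw.mul ht) (hx.mul (hy.mul hz)) (by decide)]
  simp only [mul_assoc]

theorem rot5_3 (hx : A.MatDeg 1 0 x) (hy : A.MatDeg 1 0 y) (hz : A.MatDeg 1 0 z)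
    (hw : A.MatDeg 1 0 w) (ht : A.MatDeg 0 1 t) :
    (z * (w * (t * (x * y)))).trace = (x * (y * (z * (w * t)))).trace := by
  have h := trace_comm (hx.mul hy) (hz.mul (hw.mul ht)) (by decide)
  simp only [mul_assoc] at h
  exact h.symm

theorem rot5_4 (hx : A.MatDeg 1 0 x) (hy : A.MatDeg 1 0 y) (hz : A.MatDeg 1 0 z)
    (hw : A.MatDeg 1 0 w) (ht : A.MatDeg 0 1 t) :
    (y * (z * (w * (t * x)))).trace = (x * (y * (z * (w * t)))).trace := by
  rw [trace_comm hx (hy.mul (hz.mul (hw.mul ht))) (by decide)]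
  simp only [mul_assoc]

theorem rot4_1 (hx : A.MatDeg 1 0 x) (hy : A.MatDeg 1 0 y) (hz : A.MatDeg 1 0 z)
    (hu : A.MatDeg 1 1 u) :
    (u * (x * (y * z))).trace = (x * (y * (z * u))).trace := by
  rw [trace_comm hu (hx.mul (hy.mul hz)) (by decide)]
  simp only [mul_assoc]

theorem rot4_2 (hx : A.MatDeg 1 0 x) (hy : A.MatDeg 1 0 y) (hz : A.MatDeg 1 0 z)
    (hu : A.MatDeg 1 1 u) :
    (z * (u * (x * y))).trace = (x * (y * (z * u))).trace := by
  rw [← mul_assoc, trace_comm (hz.mul hu) (hx.mul hy) (by decide)]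
  simp only [mul_assoc]

theorem rot4_3 (hx : A.MatDeg 1 0 x) (hy : A.MatDeg 1 0 y) (hz : A.MatDeg 1 0 z)
    (hu : A.MatDeg 1 1 u) :
    (y * (z * (u * x))).trace = (x * (y * (z * u))).trace := by
  rw [trace_comm hx (hy.mul (hz.mul hu)) (by decide)]
  simp only [mul_assoc]

end rot

theorem mpd_one (A : DolbeaultAlgebra Ω) : A.mpd (1 : Matrix (Fin r) (Fin r) Ω) = 0 := by
  have h1 : A.MatDeg 0 0 (1 : Matrix (Fin r) (Fin r) Ω) := by
    intro i j
    by_cases h : i = j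
    · subst h; simpa using A.one_mem
    · simp [Matrix.one_apply_ne h]
  simpa using A.mpd_mul h1 1

theorem mpdb_one (A : DolbeaultAlgebra Ω) : A.mpdb (1 : Matrix (Fin r) (Fin r) Ω) = 0 := by
  have h1 : A.MatDeg 0 0 (1 : Matrix (Fin r) (Fin r) Ω) := by
    intro i j
    by_cases h : i = j
    · subst h; simpa using A.one_mem
    · simp [Matrix.one_apply_ne h]
  simpa using A.mpdb_mul h1 1

theorem mpd_inv (A : DolbeaultAlgebra Ω) {M N : Matrix (Fin r) (Fin r) Ω}
    (dM : A.MatDeg 0 0 M) (dN : A.MatDeg 0 0 N) (h : N * M = 1) (h' : M * N = 1) :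
    A.mpd N = -(N * (A.mpd M * N)) := by
  have h1 := A.mpd_mul dN M
  rw [h, mpd_one] at h1
  simp only [add_zero, pow_zero, one_smul] at h1
  have h2 : A.mpd N * M = -(N * A.mpd M) := eq_neg_of_add_eq_zero_left h1.symm
  calc A.mpd N = A.mpd N * M * N := by rw [mul_assoc, h', mul_one]
    _ = _ := by rw [h2, neg_mul, mul_assoc]

theorem mpdb_inv (A : DolbeaultAlgebra Ω) {M N : Matrix (Fin r) (Fin r) Ω}
    (dM : A.MatDeg 0 0 M) (dN : A.MatDeg 0 0 N) (h : N * M = 1) (h' : M * N = 1) :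
    A.mpdb N = -(N * (A.mpdb M * N)) := by
  have h1 := A.mpdb_mul dN M
  rw [h, mpdb_one] at h1
  simp only [add_zero, pow_zero, one_smul] at h1
  have h2 : A.mpdb N * M = -(N * A.mpdb M) := eq_neg_of_add_eq_zero_left h1.symm
  calc A.mpdb N = A.mpdb N * M * N := by rw [mul_assoc, h', mul_one]
    _ = _ := by rw [h2, neg_mul, mul_assoc]

/-- the purely algebraic part of the computation -/
theorem core (A : DolbeaultAlgebra Ω) (a b s t X Y : Matrix (Fin r) (Fin r) Ω)
    (ha : A.MatDeg 1 0 a) (hb : A.MatDeg 1 0 b) (hs : A.MatDeg 0 1 s) (ht : A.MatDeg 0 1 t)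
    (hX : A.MatDeg 1 1 X) (hY : A.MatDeg 1 1 Y)
    (pa : A.mpd a = a * a) (pb : A.mpd b = -(b * b))
    (ba : A.mpdb a = X + a * s) (bb : A.mpdb b = Y - t * b)
    (ps : A.mpd s = -X + s * a) (pt : A.mpd t = -Y - b * t)
    (f g : Fin r → ℕ) (hf : Function.Injective f) (hg : Function.Injective g)
    (Ta : Tri f a) (Ts : Tri f s) (TX : Tri f X)
    (Tb : Tri g b) (Tt : Tri g t) (TY : Tri g Y) :
    (1 / 2 : ℂ) • Matrix.trace ((a + b) ^ 3 * (A.mpdb a + A.mpdb b - s * (a + b) - (a + b) * s)) +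
      A.pdb ((1 / 2 : ℂ) • Matrix.trace
        (a ^ 3 * b + a * b ^ 3 + (1 / 2 : ℂ) • (a * b) ^ 2)) =
    A.pd ((1 / 2 : ℂ) • Matrix.trace ((a + b) ^ 3 * (s + t)
      + ((a + b) ^ 3 - (a + b) * b * a - a * b * (a + b)) * s
      + (-(a + b) ^ 3 + (a + b) * a * b + b * a * (a + b)) * t)) := by
  have da : ∀ N, A.mpd (a * N) = A.mpd a * N - a * A.mpd N := fun N => by
    rw [A.mpd_mul ha]; simp [sub_eq_add_neg]
  have db : ∀ N, A.mpd (b * N) = A.mpd b * N - b * A.mpd N := fun N => by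
    rw [A.mpd_mul hb]; simp [sub_eq_add_neg]
  have da' : ∀ N, A.mpdb (a * N) = A.mpdb a * N - a * A.mpdb N := fun N => by
    rw [A.mpdb_mul ha]; simp [sub_eq_add_neg]
  have db' : ∀ N, A.mpdb (b * N) = A.mpdb b * N - b * A.mpdb N := fun N => by
    rw [A.mpdb_mul hb]; simp [sub_eq_add_neg]
  have za : ∀ N, Tri f N → (a * (a * N)).trace = 0 := fun N hN => Tri.trace_zero hf A Ta ha hN
  have zb : ∀ N, Tri g N → (b * (b * N)).trace = 0 := fun N hN => Tri.trace_zero hg A Tb hb hN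
  have z1 := za _ (Ta.mul TX)
  have z2 := za _ (Ta.mul (Ta.mul Ts))
  have z3 := zb _ (Tb.mul TY)
  have z4 := zb _ (Tb.mul (Tb.mul Tt))
  rw [map_smul, map_smul, pd_trace, pdb_trace]
  simp only [pow_succ, pow_zero, one_mul, mul_add, add_mul, mul_sub, sub_mul, neg_mul, mul_neg,
    mul_assoc, mpd_add, mpdb_add, mpd_sub, mpd_neg, mpdb_smul, da, db, da', db', pa, pb, ba, bb,
    ps, pt, Matrix.trace_add, Matrix.trace_sub, Matrix.trace_neg, Matrix.trace_smul]
  simp only [rot5_1 (A := A), rot5_2 (A := A), rot5_3 (A := A), rot5_4 (A := A),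
    rot4_1 (A := A), rot4_2 (A := A), rot4_3 (A := A), ha, hb, hs, ht, hX, hY, z1, z2, z3, z4]
  module

end helpers

end DolbeaultAlgebra

/-- (Ascent step for `k = 3`) In the Cholesky setting, with
`I₁ = θ³ - θθ₂θ₁ - θ₁θ₂θ` and `I₂ = -θ³ + θθ₁θ₂ + θ₂θ₁θ`:
`(1/2)Tr(Bθ³BΘ) + ∂̄((1/2)Tr(θ₁³θ₂ + θ₁θ₂³ + (1/2)(θ₁θ₂)²))
  = ∂((1/2)Tr(θ³θ̄ + I₁θ̄₁ + I₂θ̄₂))`. -/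
theorem stmt12
    (A : DolbeaultAlgebra Ω) (r : ℕ) (hr : 1 ≤ r)
    (b c binv cinv : Matrix (Fin r) (Fin r) Ω)
    (hbdeg : A.MatDeg 0 0 b) (hcdeg : A.MatDeg 0 0 c)
    (hbinvdeg : A.MatDeg 0 0 binv) (hcinvdeg : A.MatDeg 0 0 cinv)
    (hbu : ∀ i j : Fin r, j < i → b i j = 0) (hbd : ∀ i : Fin r, b i i = 1)
    (hcl : ∀ i j : Fin r, i < j → c i j = 0)
    (hbinvl : binv * b = 1) (hbinvr : b * binv = 1)
    (hcinvl : cinv * c = 1) (hcinvr : c * cinv = 1)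
    (h hinv : Matrix (Fin r) (Fin r) Ω) (hh : h = c * b) (hhinv : hinv = binv * cinv)
    (θ₁ θ₂ θ θb₁ θb₂ θb : Matrix (Fin r) (Fin r) Ω)
    (hθ₁ : θ₁ = A.mpd b * binv) (hθ₂ : θ₂ = cinv * A.mpd c) (hθ : θ = θ₁ + θ₂)
    (hθb₁ : θb₁ = A.mpdb b * binv) (hθb₂ : θb₂ = cinv * A.mpdb c) (hθb : θb = θb₁ + θb₂)
    (Bθ Bθb BΘ : Matrix (Fin r) (Fin r) Ω)
    (hBθ : Bθ = hinv * A.mpd h) (hBθb : Bθb = hinv * A.mpdb h) (hBΘ : BΘ = A.mpdb Bθ)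
    (I₁ I₂ : Matrix (Fin r) (Fin r) Ω)
    (hI₁ : I₁ = θ ^ 3 - θ * θ₂ * θ₁ - θ₁ * θ₂ * θ)
    (hI₂ : I₂ = -θ ^ 3 + θ * θ₁ * θ₂ + θ₂ * θ₁ * θ) :
    (1 / 2 : ℂ) • Matrix.trace (Bθ ^ 3 * BΘ) +
      A.pdb ((1 / 2 : ℂ) • Matrix.trace
        (θ₁ ^ 3 * θ₂ + θ₁ * θ₂ ^ 3 + (1 / 2 : ℂ) • (θ₁ * θ₂) ^ 2)) =
    A.pd ((1 / 2 : ℂ) • Matrix.trace (θ ^ 3 * θb + I₁ * θb₁ + I₂ * θb₂)) := by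
  subst hh hhinv hI₁ hI₂ hθ hθb hBΘ
  have pcinv := A.mpd_inv hcdeg hcinvdeg hcinvl hcinvr
  have bcinv := A.mpdb_inv hcdeg hcinvdeg hcinvl hcinvr
  have pbinv := A.mpd_inv hbdeg hbinvdeg hbinvl hbinvr
  have bbinv := A.mpdb_inv hbdeg hbinvdeg hbinvl hbinvr
  have d1 : A.MatDeg 1 0 θ₁ := hθ₁ ▸ hbdeg.pd.mul hbinvdeg
  have d2 : A.MatDeg 1 0 θ₂ := hθ₂ ▸ hcinvdeg.mul hcdeg.pd
  have e1 : A.MatDeg 0 1 θb₁ := hθb₁ ▸ hbdeg.pdb.mul hbinvdeg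
  have e2 : A.MatDeg 0 1 θb₂ := hθb₂ ▸ hcinvdeg.mul hcdeg.pdb
  have B : Bθ = binv * ((θ₁ + θ₂) * b) := by
    rw [hBθ, A.mpd_mul hcdeg, hθ₁, hθ₂]
    simp only [add_zero, pow_zero, one_smul, mul_add, add_mul, mul_assoc, hbinvl, mul_one]
    rw [← mul_assoc cinv c, hcinvl, one_mul, add_comm]
  have pdbb : A.mpdb b = θb₁ * b := by rw [hθb₁, mul_assoc, hbinvl, mul_one]
  have bbinv' : A.mpdb binv = -(binv * θb₁) := by rw [bbinv, hθb₁]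
  have BB : A.mpdb Bθ = binv * ((A.mpdb θ₁ + A.mpdb θ₂ - θb₁ * (θ₁ + θ₂) - (θ₁ + θ₂) * θb₁) * b) := by
    rw [B, A.mpdb_mul hbinvdeg, A.mpdb_mul (d1.add d2), bbinv', pdbb, DolbeaultAlgebra.mpdb_add]
    simp
    noncomm_ring
  have tr : (Bθ ^ 3 * A.mpdb Bθ).trace = ((θ₁ + θ₂) ^ 3 *
      (A.mpdb θ₁ + A.mpdb θ₂ - θb₁ * (θ₁ + θ₂) - (θ₁ + θ₂) * θb₁)).trace := by
    have c1 : ∀ N, b * (binv * N) = N := fun N => by rw [← mul_assoc, hbinvr, one_mul]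
    rw [BB, B]
    have d12 := d1.add d2
    generalize θ₁ + θ₂ = θ at *
    have dW : A.MatDeg 1 1 (A.mpdb θ₁ + A.mpdb θ₂ - θb₁ * θ - θ * θb₁) := by
      intro i j
      exact Submodule.sub_mem _ (Submodule.sub_mem _ (Submodule.add_mem _ (d1.pdb i j)
        (d2.pdb i j)) ((e1.mul d12) i j)) ((d12.mul e1) i j)
    generalize A.mpdb θ₁ + A.mpdb θ₂ - θb₁ * θ - θ * θb₁ = W at *
    simp only [pow_succ, pow_zero, one_mul, mul_assoc, c1]
    rw [DolbeaultAlgebra.trace_comm hbinvdeg (d12.mul (d12.mul (d12.mul (dW.mul hbdeg))))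
      (by decide)]
    simp only [mul_assoc, hbinvr, mul_one]
  rw [tr]
  have hf : Function.Injective (fun i : Fin r => r - (i : ℕ)) := by
    intro i j hij
    have := i.2
    have := j.2
    ext
    simp only at hij
    omega
  have Tb : DolbeaultAlgebra.Tri (fun i : Fin r => r - (i : ℕ)) b := by
    intro i j hij
    refine hbu i j ?_
    simp only at hij
    omega
  have Tc : DolbeaultAlgebra.Tri (fun i : Fin r => (i : ℕ)) c := fun i j hij => hcl i j hij
  have Tbi := Tb.inv hf A hbdeg hbinvdeg hbinvr
  have Tci := Tc.inv Fin.val_injective A hcdeg hcinvdeg hcinvr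
  refine A.core θ₁ θ₂ θb₁ θb₂ (A.mpdb (A.mpd b) * binv) (cinv * A.mpdb (A.mpd c)) d1 d2 e1 e2
    (hbdeg.pd.pdb.mul hbinvdeg) (hcinvdeg.mul hcdeg.pd.pdb) ?_ ?_ ?_ ?_ ?_ ?_
    (fun i : Fin r => r - (i : ℕ)) (fun i : Fin r => (i : ℕ)) hf Fin.val_injective
    (hθ₁ ▸ (Tb.pd A).mul Tbi) (hθb₁ ▸ (Tb.pdb A).mul Tbi) (((Tb.pd A).pdb A).mul Tbi)
    (hθ₂ ▸ Tci.mul (Tc.pd A)) (hθb₂ ▸ Tci.mul (Tc.pdb A)) (Tci.mul ((Tc.pd A).pdb A))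
  · rw [hθ₁, A.mpd_mul hbdeg.pd, A.mpd_mpd, pbinv]
    simp [mul_assoc]
  · rw [hθ₂, A.mpd_mul hcinvdeg, A.mpd_mpd, pcinv]
    simp [mul_assoc]
  · rw [hθ₁, hθb₁, A.mpdb_mul hbdeg.pd, bbinv]
    simp [mul_assoc]
  · rw [hθ₂, hθb₂, A.mpdb_mul hcinvdeg, bcinv]
    simp [mul_assoc]
    abel
  · rw [hθ₁, hθb₁, A.mpd_mul hbdeg.pdb, A.mpd_mpdb, pbinv]
    simp [mul_assoc]
  · rw [hθ₂, hθb₂, A.mpd_mul hcinvdeg, A.mpd_mpdb, pcinv]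
    simp [mul_assoc]
    abel
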